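/- Suppose σ > 0, P_0 > 0, P_1 > 0, π_0^t, π_0^r ∈ (0,1), the receiver costs satisfy C_{10}^r > C_{00}^r and C_{01}^r > C_{11}^r, and the transmitter costs satisfy C_{10}^t < C_{00}^t and C_{01}^t < C_{11}^t (i.e., ξ_0 < 0 and ξ_1 < 0). Then the binary Gaussian signaling game has no informative Nash equilibrium: there is no Nash equilibrium ((S_0*, S_1*), Γ_1*) with S_0* ≠ S_1*. -/

import Mathlib

/-- Gaussian density with standard deviation `σ` (centered at 0). -/
noncomputable def gauss (σ y : ℝ) : ℝ :=
  (1 / (σ * Real.sqrt (2 * Real.pi))) * Real.exp (-y ^ 2 / (2 * σ ^ 2))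

/-- Bayes risk of a player with prior `π₀` (and `π₁ = 1 - π₀`) and costs `Cⱼᵢ`
(cost of deciding `Hⱼ` when `Hᵢ` is true), when the signal levels are `S₀, S₁` and
the receiver decides `H₁` iff the observation lies in `Γ₁`. -/
noncomputable def bayesRisk (σ S0 S1 π0 C00 C01 C10 C11 : ℝ) (Γ1 : Set ℝ) : ℝ :=
  π0 * (C00 * (∫ y in Γ1ᶜ, gauss σ (y - S0)) + C10 * (∫ y in Γ1, gauss σ (y - S0)))
    + (1 - π0) * (C01 * (∫ y in Γ1ᶜ, gauss σ (y - S1)) + C11 * (∫ y in Γ1, gauss σ (y - S1)))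

/-!
The transmitter wants the receiver to err under both hypotheses, so at an equilibrium it cannot
gain by moving either signal level to a common admissible level `c`. This forces
`P_{S₁}(Γ₁) ≤ P_c(Γ₁) ≤ P_{S₀}(Γ₁)`, where `P_S` is the law of the observation under level `S`.

The receiver, on the other hand, minimises `a P_{S₀}(Γ) - b P_{S₁}(Γ)` with `a, b > 0`. If
`S₀ ≠ S₁` the Gaussian likelihood ratio takes arbitrarily large and arbitrarily small values, so
the optimal region strictly beats both trivial regions `∅` and `ℝ`. Comparing with `∅` when
`b ≤ a` and with `ℝ` when `a ≤ b` gives `P_{S₀}(Γ₁) < P_{S₁}(Γ₁)`, a contradiction.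
-/

section SignalingGame

open MeasureTheory
open ProbabilityTheory hiding bayesRisk
open scoped NNReal

theorem measureReal_lt_of_forall_mul_sub_mul_le {α : Type*} [MeasurableSpace α] {P₀ P₁ : Measure α}
    [IsProbabilityMeasure P₀] [IsProbabilityMeasure P₁] {a b : ℝ} (ha : 0 < a) (hb : 0 < b)
    {Γ : Set α}
    (hmin : ∀ T, MeasurableSet T →
      a * P₀.real Γ - b * P₁.real Γ ≤ a * P₀.real T - b * P₁.real T)
    (hlt : ∃ T, MeasurableSet T ∧ a * P₀.real T < b * P₁.real T)
    (hgt : ∃ T, MeasurableSet T ∧ b * P₁.real T < a * P₀.real T) :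
    P₀.real Γ < P₁.real Γ := by
  obtain ⟨T, hT, hT_lt⟩ := hlt
  obtain ⟨U, hU, hU_gt⟩ := hgt
  have beats_empty : a * P₀.real Γ < b * P₁.real Γ := by linarith [hmin T hT]
  have beats_univ : b * (1 - P₁.real Γ) < a * (1 - P₀.real Γ) := by
    have hmin_compl := hmin Uᶜ hU.compl
    rw [probReal_compl_eq_one_sub hU, probReal_compl_eq_one_sub hU] at hmin_compl
    linarith
  rcases le_total b a with hba | hab
  · refine lt_of_mul_lt_mul_left ?_ hb.le
    calc b * P₀.real Γ ≤ a * P₀.real Γ := by gcongr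
      _ < b * P₁.real Γ := beats_empty
  · have hcompl_nonneg : 0 ≤ 1 - P₁.real Γ := sub_nonneg.2 measureReal_le_one
    have hcompl_lt : 1 - P₁.real Γ < 1 - P₀.real Γ := by
      refine lt_of_mul_lt_mul_left ?_ ha.le
      calc a * (1 - P₁.real Γ) ≤ b * (1 - P₁.real Γ) := by gcongr
        _ < a * (1 - P₀.real Γ) := beats_univ
    linarith

theorem exists_setIntegral_lt_setIntegral {X : Type*} [TopologicalSpace X] [MeasurableSpace X]
    {μ : Measure X} [μ.IsOpenPosMeasure] {f g : X → ℝ} (hf : Continuous f) (hg : Continuous g)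
    (hfi : Integrable f μ) (hgi : Integrable g μ) {x : X} (hx : f x < g x) :
    ∃ T, MeasurableSet T ∧ ∫ y in T, f y ∂μ < ∫ y in T, g y ∂μ := by
  by_contra! h
  have hle : g ≤ᵐ[μ] f := ae_le_of_forall_setIntegral_le hgi hfi fun T hT _ ↦ h T hT
  have hnull : μ {y | f y < g y} = 0 := by simpa [Filter.EventuallyLE, ae_iff] using hle
  exact ((isOpen_lt hf hg).measure_pos μ ⟨x, hx⟩).ne' hnull

theorem gaussianReal_real_apply (m : ℝ) {v : ℝ≥0} (hv : v ≠ 0) (s : Set ℝ) :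
    (gaussianReal m v).real s = ∫ y in s, gaussianPDFReal m v y := by
  rw [measureReal_def, gaussianReal_apply_eq_integral m hv s,
    ENNReal.toReal_ofReal (integral_nonneg (gaussianPDFReal_nonneg m v))]

theorem continuous_gaussianPDFReal (m : ℝ) (v : ℝ≥0) : Continuous (gaussianPDFReal m v) := by
  rw [gaussianPDFReal_def]
  fun_prop

theorem exists_mul_gaussianPDFReal_lt {m₀ m₁ : ℝ} (hm : m₀ ≠ m₁) {v : ℝ≥0} (hv : v ≠ 0)
    {a b : ℝ} (ha : 0 < a) (hb : 0 < b) :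
    ∃ y, a * gaussianPDFReal m₀ v y < b * gaussianPDFReal m₁ v y := by
  have hv' : (0 : ℝ) < v := NNReal.coe_pos.2 (pos_iff_ne_zero.2 hv)
  have mul_pdf_eq {c : ℝ} (hc : 0 < c) (m y : ℝ) : c * gaussianPDFReal m v y =
      (√(2 * Real.pi * v))⁻¹ * Real.exp (Real.log c + -(y - m) ^ 2 / (2 * v)) := by
    rw [Real.exp_add, Real.exp_log hc, gaussianPDFReal]
    ring
  -- After taking logarithms the inequality is affine in `y`, with slope `(m₁ - m₀) / v ≠ 0`.
  have exponent_sub (y : ℝ) : Real.log b + -(y - m₁) ^ 2 / (2 * v)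
      - (Real.log a + -(y - m₀) ^ 2 / (2 * v)) =
      ((m₁ - m₀) * y - (v * (Real.log a - Real.log b) + (m₁ ^ 2 - m₀ ^ 2) / 2)) / v := by
    field_simp
    ring
  refine ⟨(v * (Real.log a - Real.log b) + (m₁ ^ 2 - m₀ ^ 2) / 2 + 1) / (m₁ - m₀), ?_⟩
  rw [mul_pdf_eq ha, mul_pdf_eq hb]
  gcongr ?_ * Real.exp ?_
  rw [← sub_pos, exponent_sub, mul_div_cancel₀ _ (sub_ne_zero.2 hm.symm), add_sub_cancel_left]
  exact one_div_pos.2 hv'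

theorem exists_mul_gaussianReal_real_lt {m₀ m₁ : ℝ} (hm : m₀ ≠ m₁) {v : ℝ≥0} (hv : v ≠ 0)
    {a b : ℝ} (ha : 0 < a) (hb : 0 < b) :
    ∃ T, MeasurableSet T ∧ a * (gaussianReal m₀ v).real T < b * (gaussianReal m₁ v).real T := by
  obtain ⟨y, hy⟩ := exists_mul_gaussianPDFReal_lt hm hv ha hb
  simp only [gaussianReal_real_apply _ hv, ← integral_const_mul]
  exact exists_setIntegral_lt_setIntegral
    ((continuous_gaussianPDFReal m₀ v).const_mul a) ((continuous_gaussianPDFReal m₁ v).const_mul b)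
    ((integrable_gaussianPDFReal m₀ v).const_mul a) ((integrable_gaussianPDFReal m₁ v).const_mul b)
    hy

/-- The law `P_S` of the observation when the signal level `S` is sent through additive centered
Gaussian noise of standard deviation `σ`. Mathlib parametrises Gaussian laws by the variance. -/
noncomputable abbrev observationLaw (σ S : ℝ) : Measure ℝ :=
  gaussianReal S (σ ^ 2).toNNReal

variable {σ S0 S1 π0 C00 C01 C10 C11 : ℝ} {Γ : Set ℝ}

theorem gauss_sub_eq_gaussianPDFReal (hσ : 0 < σ) (S y : ℝ) :
    gauss σ (y - S) = gaussianPDFReal S (σ ^ 2).toNNReal y := by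
  rw [gauss, gaussianPDFReal, Real.coe_toNNReal _ (sq_nonneg σ),
    Real.sqrt_mul (x := 2 * Real.pi) (by positivity), Real.sqrt_sq hσ.le, one_div, mul_comm σ]

theorem toNNReal_sq_ne_zero (hσ : σ ≠ 0) : (σ ^ 2).toNNReal ≠ 0 :=
  (Real.toNNReal_pos.2 (by positivity)).ne'

theorem setIntegral_gauss_sub (hσ : 0 < σ) (S : ℝ) (s : Set ℝ) :
    ∫ y in s, gauss σ (y - S) = (observationLaw σ S).real s := by
  simp only [gauss_sub_eq_gaussianPDFReal hσ,
    gaussianReal_real_apply S (toNNReal_sq_ne_zero hσ.ne')]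

theorem bayesRisk_eq (hσ : 0 < σ) (hΓ : MeasurableSet Γ) :
    bayesRisk σ S0 S1 π0 C00 C01 C10 C11 Γ =
      π0 * C00 + (1 - π0) * C01 + (π0 * (C10 - C00) * (observationLaw σ S0).real Γ
        - (1 - π0) * (C01 - C11) * (observationLaw σ S1).real Γ) := by
  simp only [bayesRisk, setIntegral_gauss_sub hσ, probReal_compl_eq_one_sub hΓ]
  ring

theorem observationLaw_real_le_of_bayesRisk_le_left (hσ : 0 < σ) (hΓ : MeasurableSet Γ)
    (hπ : 0 < π0) (hC : C10 < C00) {c : ℝ}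
    (h : bayesRisk σ S0 S1 π0 C00 C01 C10 C11 Γ ≤ bayesRisk σ c S1 π0 C00 C01 C10 C11 Γ) :
    (observationLaw σ c).real Γ ≤ (observationLaw σ S0).real Γ := by
  rw [bayesRisk_eq hσ hΓ, bayesRisk_eq hσ hΓ, add_le_add_iff_left, sub_le_sub_iff_right] at h
  exact (mul_le_mul_left_of_neg (mul_neg_of_pos_of_neg hπ (sub_neg.2 hC))).1 h

theorem observationLaw_real_le_of_bayesRisk_le_right (hσ : 0 < σ) (hΓ : MeasurableSet Γ)
    (hπ : π0 < 1) (hC : C01 < C11) {c : ℝ}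
    (h : bayesRisk σ S0 S1 π0 C00 C01 C10 C11 Γ ≤ bayesRisk σ S0 c π0 C00 C01 C10 C11 Γ) :
    (observationLaw σ S1).real Γ ≤ (observationLaw σ c).real Γ := by
  rw [bayesRisk_eq hσ hΓ, bayesRisk_eq hσ hΓ, add_le_add_iff_left, sub_le_sub_iff_left] at h
  exact (mul_le_mul_left_of_neg (mul_neg_of_pos_of_neg (sub_pos.2 hπ) (sub_neg.2 hC))).1 h

theorem observationLaw_real_lt_of_forall_bayesRisk_le (hσ : 0 < σ) (hΓ : MeasurableSet Γ)
    (hπ : π0 ∈ Set.Ioo 0 1) (h10 : C00 < C10) (h01 : C11 < C01) (hS : S0 ≠ S1)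
    (hmin : ∀ T, MeasurableSet T →
      bayesRisk σ S0 S1 π0 C00 C01 C10 C11 Γ ≤ bayesRisk σ S0 S1 π0 C00 C01 C10 C11 T) :
    (observationLaw σ S0).real Γ < (observationLaw σ S1).real Γ := by
  have ha : 0 < π0 * (C10 - C00) := mul_pos hπ.1 (sub_pos.2 h10)
  have hb : 0 < (1 - π0) * (C01 - C11) := mul_pos (sub_pos.2 hπ.2) (sub_pos.2 h01)
  have hv : (σ ^ 2).toNNReal ≠ 0 := toNNReal_sq_ne_zero hσ.ne'
  refine measureReal_lt_of_forall_mul_sub_mul_le ha hb (fun T hT ↦ ?_)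
    (exists_mul_gaussianReal_real_lt hS hv ha hb) (exists_mul_gaussianReal_real_lt hS.symm hv hb ha)
  have h := hmin T hT
  rwa [bayesRisk_eq hσ hΓ, bayesRisk_eq hσ hT, add_le_add_iff_left] at h

theorem stmt_15_general (A0 A1 : Set ℝ) (hA : (A0 ∩ A1).Nonempty)
    {σ π0t π0r C00t C01t C10t C11t C00r C01r C10r C11r : ℝ} (hσ : 0 < σ)
    (hπt : π0t ∈ Set.Ioo 0 1) (hπr : π0r ∈ Set.Ioo 0 1)
    (hr10 : C00r < C10r) (hr01 : C11r < C01r) (ht10 : C10t < C00t) (ht01 : C01t < C11t) :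
    ¬ ∃ (S0s S1s : ℝ) (Γ1s : Set ℝ), MeasurableSet Γ1s
        ∧ S0s ∈ A0 ∧ S1s ∈ A1
        ∧ (∀ S0 S1 : ℝ, S0 ∈ A0 → S1 ∈ A1 →
            bayesRisk σ S0s S1s π0t C00t C01t C10t C11t Γ1s
              ≤ bayesRisk σ S0 S1 π0t C00t C01t C10t C11t Γ1s)
        ∧ (∀ Γ1 : Set ℝ, MeasurableSet Γ1 →
            bayesRisk σ S0s S1s π0r C00r C01r C10r C11r Γ1s
              ≤ bayesRisk σ S0s S1s π0r C00r C01r C10r C11r Γ1)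
        ∧ S0s ≠ S1s := by
  rintro ⟨S0, S1, Γ, hΓ, hS0, hS1, htransmitter, hreceiver, hne⟩
  obtain ⟨c, hc0, hc1⟩ := hA
  have hle_S0 : (observationLaw σ c).real Γ ≤ (observationLaw σ S0).real Γ :=
    observationLaw_real_le_of_bayesRisk_le_left hσ hΓ hπt.1 ht10 (htransmitter c S1 hc0 hS1)
  have hS1_le : (observationLaw σ S1).real Γ ≤ (observationLaw σ c).real Γ :=
    observationLaw_real_le_of_bayesRisk_le_right hσ hΓ hπt.2 ht01 (htransmitter S0 c hS0 hc1)
  have hlt : (observationLaw σ S0).real Γ < (observationLaw σ S1).real Γ :=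
    observationLaw_real_lt_of_forall_bayesRisk_le hσ hΓ hπr hr10 hr01 hne hreceiver
  exact hlt.not_ge (hS1_le.trans hle_S0)

end SignalingGame

/-- When `ξ₀ < 0` and `ξ₁ < 0` (`C₁₀ᵗ < C₀₀ᵗ` and `C₀₁ᵗ < C₁₁ᵗ` while
`C₁₀ʳ > C₀₀ʳ` and `C₀₁ʳ > C₁₁ʳ`), the binary Gaussian signaling game has no
informative Nash equilibrium. -/
theorem stmt_15 (σ P0 P1 π0t π0r C00t C01t C10t C11t C00r C01r C10r C11r : ℝ)
    (hσ : 0 < σ) (hP0 : 0 < P0) (hP1 : 0 < P1)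
    (hπt : π0t ∈ Set.Ioo (0 : ℝ) 1) (hπr : π0r ∈ Set.Ioo (0 : ℝ) 1)
    (hr10 : C10r > C00r) (hr01 : C01r > C11r)
    (ht10 : C10t < C00t) (ht01 : C01t < C11t) :
    ¬ ∃ (S0s S1s : ℝ) (Γ1s : Set ℝ), MeasurableSet Γ1s
        ∧ S0s ^ 2 ≤ P0 ∧ S1s ^ 2 ≤ P1
        ∧ (∀ S0 S1 : ℝ, S0 ^ 2 ≤ P0 → S1 ^ 2 ≤ P1 →
            bayesRisk σ S0s S1s π0t C00t C01t C10t C11t Γ1s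
              ≤ bayesRisk σ S0 S1 π0t C00t C01t C10t C11t Γ1s)
        ∧ (∀ Γ1 : Set ℝ, MeasurableSet Γ1 →
            bayesRisk σ S0s S1s π0r C00r C01r C10r C11r Γ1s
              ≤ bayesRisk σ S0s S1s π0r C00r C01r C10r C11r Γ1)
        ∧ S0s ≠ S1s := by
  exact stmt_15_general {S | S ^ 2 ≤ P0} {S | S ^ 2 ≤ P1}
    ⟨0, by simpa using hP0.le, by simpa using hP1.le⟩ hσ hπt hπr hr10 hr01 ht10 ht01
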